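/- Let n ≥ 1, let (Y,d) be a metric space with at least two points and basepoint y₀, 0 < β ≤ 1, and equip ℝⁿ × Y with the metric D((x₁,y₁),(x₂,y₂)) = max{|x₁−x₂|^β, d(y₁,y₂)}. Suppose a group Γ acts on ℝⁿ × Y such that every γ ∈ Γ has the form γ(x,y) = (a_γ A_γ(x + x_γ + h_γ(y)), σ_γ(y)) with a_γ > 0, A_γ ∈ O(n), x_γ ∈ ℝⁿ, h_γ: Y → ℝⁿ Lipschitz as a map (Y,d) → (ℝⁿ,|·|^β) with h_γ(y₀) = 0, and σ_γ a similarity of Y, and suppose Γ acts as a uniform quasisimilarity group of (ℝⁿ × Y, D). Then for every γ ∈ Γ the similarity constant of σ_γ equals a_γ^β, i.e. d(σ_γ(y₁), σ_γ(y₂)) = a_γ^β · d(y₁,y₂) for all y₁, y₂ ∈ Y. -/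

import Mathlib

/-- The metric `D((x₁,y₁),(x₂,y₂)) = max{|x₁−x₂|^β, d(y₁,y₂)}` on `ℝⁿ × Y`. -/
noncomputable def prodDist (n : ℕ) {Y : Type*} [MetricSpace Y] (β : ℝ)
    (p q : EuclideanSpace ℝ (Fin n) × Y) : ℝ :=
  max (‖p.1 - q.1‖ ^ β) (dist p.2 q.2)

/-!
Moving only the `ℝⁿ`-coordinate, respectively only the `Y`-coordinate, the quasisimilarity
inequalities for `γ` give `C_γ / M ≤ a_γ ^ β` and `c_γ ≤ M C_γ`, where `c_γ` is the similarity
constant of `σ_γ`. So `γ ↦ c_γ / a_γ ^ β` is bounded by `M ^ 2`. It is also a homomorphism from `Γ`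
to the positive reals, and a bounded one is trivial: an element with value `> 1` has powers of
unbounded value, and one with value `< 1` has an inverse with value `> 1`.
-/

/-- The distance `max {d(x₁,x₂)^β, d(y₁,y₂)}` on `X × Y`, that is `prodDist` with an arbitrary
metric space `X` in place of `ℝⁿ`. -/
noncomputable def snowflakeProdDist {X Y : Type*} [Dist X] [Dist Y] (β : ℝ) (p q : X × Y) : ℝ :=
  max (dist p.1 q.1 ^ β) (dist p.2 q.2)

/-- `F` is an `(M, C)`-quasisimilarity for the distance `d`. The distance is a bare function, so
that `snowflakeProdDist` can be used without equipping the product with a second metric; bijectivity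
of `F` and the signs of `M` and `C` are not part of the definition. -/
def IsQuasisimilarity {Z : Type*} (d : Z → Z → ℝ) (M C : ℝ) (F : Z → Z) : Prop :=
  ∀ p q, C / M * d p q ≤ d (F p) (F q) ∧ d (F p) (F q) ≤ M * C * d p q

/-- `F` scales distances in the base `Y` by `c` and distances within each fibre `X × {y}` by `a`, as
`(x, y) ↦ (a A (x + h y), σ y)` does; bijectivity is not part of the definition. Since `Y` is a
metric space, `dist_snd` already forces `F` to map fibres into fibres. -/
structure IsFiberedSimilarity {X Y : Type*} [MetricSpace X] [MetricSpace Y] (a c : ℝ)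
    (F : X × Y → X × Y) : Prop where
  fst_pos : 0 < a
  snd_pos : 0 < c
  dist_fst : ∀ p q, p.2 = q.2 → dist (F p).1 (F q).1 = a * dist p.1 q.1
  dist_snd : ∀ p q, dist (F p).2 (F q).2 = c * dist p.2 q.2

theorem map_le_one_of_bddAbove {G K : Type*} [Monoid G] [Semiring K] [LinearOrder K]
    [IsStrictOrderedRing K] [ExistsAddOfLE K] [Archimedean K] (f : G →* K)
    (hf : BddAbove (Set.range f)) (g : G) : f g ≤ 1 := by
  obtain ⟨B, hB⟩ := hf
  by_contra! hg
  obtain ⟨k, hk⟩ := pow_unbounded_of_one_lt B hg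
  rw [← map_pow] at hk
  exact hk.not_ge (hB (Set.mem_range_self (g ^ k)))

theorem map_eq_one_of_bddAbove {G K : Type*} [Group G] [Semiring K] [LinearOrder K]
    [IsStrictOrderedRing K] [ExistsAddOfLE K] [Archimedean K] (f : G →* K)
    (hf : BddAbove (Set.range f)) {g : G} (hg : 0 ≤ f g) : f g = 1 := by
  refine (map_le_one_of_bddAbove f hf g).antisymm ?_
  calc 1 = f g * f g⁻¹ := by rw [← map_mul, mul_inv_cancel, map_one]
    _ ≤ f g := mul_le_of_le_one_right hg (map_le_one_of_bddAbove f hf g⁻¹)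

theorem prodDist_eq_snowflakeProdDist (n : ℕ) {Y : Type*} [MetricSpace Y] (β : ℝ) :
    prodDist n (Y := Y) β = snowflakeProdDist β := by
  ext p q
  rw [prodDist, snowflakeProdDist, dist_eq_norm]

theorem isFiberedSimilarity_of_eq_smul_add {E Y : Type*} [NormedAddCommGroup E]
    [NormedSpace ℝ E] [MetricSpace Y] {a c : ℝ} (ha : 0 < a) (hc : 0 < c) (A : E →ₗᵢ[ℝ] E)
    (h : Y → E) {σ : Y → Y} (hσ : ∀ y y', dist (σ y) (σ y') = c * dist y y')
    {F : E × Y → E × Y} (hF : ∀ p, F p = (a • A (p.1 + h p.2), σ p.2)) :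
    IsFiberedSimilarity a c F where
  fst_pos := ha
  snd_pos := hc
  dist_fst p q hpq := by
    simp only [hF, hpq, dist_smul₀, A.dist_map, dist_add_right, Real.norm_of_nonneg ha.le]
  dist_snd p q := by simp only [hF, hσ]

namespace IsFiberedSimilarity

variable {X Y : Type*} [MetricSpace X] [MetricSpace Y] {a a' c c' : ℝ} {F F' : X × Y → X × Y}

protected theorem id : IsFiberedSimilarity 1 1 (id : X × Y → X × Y) where
  fst_pos := one_pos
  snd_pos := one_pos
  dist_fst _ _ _ := (one_mul _).symm
  dist_snd _ _ := (one_mul _).symm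

theorem snd_apply_eq (hF : IsFiberedSimilarity a c F) {p q : X × Y} (hpq : p.2 = q.2) :
    (F p).2 = (F q).2 := by
  rw [← dist_eq_zero, hF.dist_snd, hpq, dist_self, mul_zero]

protected theorem comp (hF : IsFiberedSimilarity a c F) (hF' : IsFiberedSimilarity a' c' F') :
    IsFiberedSimilarity (a * a') (c * c') (F ∘ F') where
  fst_pos := mul_pos hF.fst_pos hF'.fst_pos
  snd_pos := mul_pos hF.snd_pos hF'.snd_pos
  dist_fst p q hpq := by
    simp only [Function.comp_apply, hF.dist_fst _ _ (hF'.snd_apply_eq hpq),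
      hF'.dist_fst p q hpq, mul_assoc]
  dist_snd p q := by simp only [Function.comp_apply, hF.dist_snd, hF'.dist_snd, mul_assoc]

theorem fst_unique [Nontrivial X] [Nonempty Y] (hF : IsFiberedSimilarity a c F)
    (hF' : IsFiberedSimilarity a' c' F) : a = a' := by
  obtain ⟨x, x', hx⟩ := exists_pair_ne X
  obtain ⟨y⟩ := ‹Nonempty Y›
  refine mul_right_cancel₀ (dist_ne_zero.2 hx) ?_
  rw [← hF.dist_fst (x, y) (x', y) rfl, hF'.dist_fst (x, y) (x', y) rfl]

theorem snd_unique [Nonempty X] [Nontrivial Y] (hF : IsFiberedSimilarity a c F)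
    (hF' : IsFiberedSimilarity a' c' F) : c = c' := by
  obtain ⟨y, y', hy⟩ := exists_pair_ne Y
  obtain ⟨x⟩ := ‹Nonempty X›
  refine mul_right_cancel₀ (dist_ne_zero.2 hy) ?_
  rw [← hF.dist_snd (x, y) (x, y'), hF'.dist_snd (x, y) (x, y')]

theorem div_le_rpow_of_isQuasisimilarity [Nontrivial X] [Nonempty Y] {β M C : ℝ}
    (hF : IsFiberedSimilarity a c F) (hq : IsQuasisimilarity (snowflakeProdDist β) M C F) :
    C / M ≤ a ^ β := by
  obtain ⟨x, x', hx⟩ := exists_pair_ne X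
  obtain ⟨y⟩ := ‹Nonempty Y›
  have hd : 0 < dist x x' ^ β := Real.rpow_pos_of_pos (dist_pos.2 hx) β
  refine le_of_mul_le_mul_right ?_ hd
  calc C / M * dist x x' ^ β
      ≤ C / M * snowflakeProdDist β (x, y) (x', y) := by
        simp [snowflakeProdDist, hd.le]
    _ ≤ snowflakeProdDist β (F (x, y)) (F (x', y)) := (hq _ _).1
    _ = a ^ β * dist x x' ^ β := by
        rw [snowflakeProdDist, hF.dist_fst (x, y) (x', y) rfl, hF.dist_snd, dist_self, mul_zero,
          Real.mul_rpow hF.fst_pos.le dist_nonneg,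
          max_eq_left (mul_nonneg (Real.rpow_nonneg hF.fst_pos.le β) hd.le)]

theorem snd_le_mul_of_isQuasisimilarity [Nonempty X] [Nontrivial Y] {β M C : ℝ} (hβ : 0 < β)
    (hF : IsFiberedSimilarity a c F) (hq : IsQuasisimilarity (snowflakeProdDist β) M C F) :
    c ≤ M * C := by
  obtain ⟨y, y', hy⟩ := exists_pair_ne Y
  obtain ⟨x⟩ := ‹Nonempty X›
  refine le_of_mul_le_mul_right ?_ (dist_pos.2 hy)
  calc c * dist y y'
      = dist (F (x, y)).2 (F (x, y')).2 := (hF.dist_snd (x, y) (x, y')).symm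
    _ ≤ snowflakeProdDist β (F (x, y)) (F (x, y')) := le_max_right _ _
    _ ≤ M * C * snowflakeProdDist β (x, y) (x, y') := (hq _ _).2
    _ = M * C * dist y y' := by simp [snowflakeProdDist, Real.zero_rpow hβ.ne']

theorem snd_le_sq_mul_rpow [Nontrivial X] [Nontrivial Y] {β M C : ℝ} (hβ : 0 < β)
    (hF : IsFiberedSimilarity a c F) (hq : IsQuasisimilarity (snowflakeProdDist β) M C F) :
    c ≤ M ^ 2 * a ^ β :=
  calc c ≤ M * C := hF.snd_le_mul_of_isQuasisimilarity hβ hq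
    _ = M ^ 2 * (C / M) := by field_simp
    _ ≤ M ^ 2 * a ^ β := by gcongr; exact hF.div_le_rpow_of_isQuasisimilarity hq

/-- The character `γ ↦ c γ / a γ ^ β` of a monoid acting by fibered similarities. It compares how
`γ` scales the two terms of `snowflakeProdDist β`. -/
noncomputable def ratioHom [Nontrivial X] [Nontrivial Y] {Γ : Type*} [Monoid Γ]
    {ρ : Γ →* Equiv.Perm (X × Y)} {a c : Γ → ℝ} (hρ : ∀ γ, IsFiberedSimilarity (a γ) (c γ) (ρ γ))
    (β : ℝ) : Γ →* ℝ where
  toFun γ := c γ / a γ ^ β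
  map_one' := by
    have h_one : IsFiberedSimilarity (a 1) (c 1) (ρ 1) := hρ 1
    rw [map_one, Equiv.Perm.coe_one] at h_one
    rw [h_one.fst_unique .id, h_one.snd_unique .id, Real.one_rpow, div_one]
  map_mul' γ δ := by
    have h_mul : IsFiberedSimilarity (a (γ * δ)) (c (γ * δ)) (ρ (γ * δ)) := hρ (γ * δ)
    rw [map_mul, Equiv.Perm.coe_mul] at h_mul
    have h_comp := (hρ γ).comp (hρ δ)
    rw [h_mul.fst_unique h_comp, h_mul.snd_unique h_comp,
      Real.mul_rpow (hρ γ).fst_pos.le (hρ δ).fst_pos.le, mul_div_mul_comm]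

end IsFiberedSimilarity

theorem similarity_constant_eq_rpow_general {X Y : Type*} [MetricSpace X] [Nontrivial X]
    [MetricSpace Y] [Nontrivial Y] {β : ℝ} (hβ : 0 < β) {Γ : Type*} [Group Γ]
    (ρ : Γ →* Equiv.Perm (X × Y)) {a c : Γ → ℝ}
    (hρ : ∀ γ, IsFiberedSimilarity (a γ) (c γ) (ρ γ)) {M : ℝ}
    (hqs : ∀ γ, ∃ C, IsQuasisimilarity (snowflakeProdDist β) M C (ρ γ)) (γ : Γ) :
    c γ = a γ ^ β := by
  have ha_rpow (γ) : 0 < a γ ^ β := Real.rpow_pos_of_pos (hρ γ).fst_pos β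
  have h_bdd : BddAbove (Set.range (IsFiberedSimilarity.ratioHom hρ β)) := by
    refine ⟨M ^ 2, Set.forall_mem_range.2 fun δ ↦ (div_le_iff₀ (ha_rpow δ)).2 ?_⟩
    obtain ⟨C, hC⟩ := hqs δ
    exact (hρ δ).snd_le_sq_mul_rpow hβ hC
  have h_ratio : c γ / a γ ^ β = 1 :=
    map_eq_one_of_bddAbove _ h_bdd (div_nonneg (hρ γ).snd_pos.le (ha_rpow γ).le)
  exact (div_eq_one_iff_eq (ha_rpow γ).ne').1 h_ratio

/-- Lemma 3.1(1): If a group `Γ` acts on `ℝⁿ × Y` by maps of the form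
`γ(x,y) = (a_γ A_γ(x + x_γ + h_γ y), σ_γ y)` and acts as a uniform quasisimilarity group
of `(ℝⁿ × Y, D)`, then the similarity constant of `σ_γ` is `a_γ^β`:
`d(σ_γ y₁, σ_γ y₂) = a_γ^β · d(y₁,y₂)`. -/
theorem similarity_constant_eq_rpow (n : ℕ) (hn : 1 ≤ n) {Y : Type*} [MetricSpace Y]
    (hY : ∃ y y' : Y, y ≠ y') (y₀ : Y) (β : ℝ) (hβ0 : 0 < β) (hβ1 : β ≤ 1)
    {Γ : Type*} [Group Γ]
    (ρ : Γ →* Equiv.Perm (EuclideanSpace ℝ (Fin n) × Y))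
    (a : Γ → ℝ) (ha : ∀ γ : Γ, 0 < a γ)
    (A : Γ → EuclideanSpace ℝ (Fin n) ≃ₗᵢ[ℝ] EuclideanSpace ℝ (Fin n))
    (x : Γ → EuclideanSpace ℝ (Fin n))
    (h : Γ → Y → EuclideanSpace ℝ (Fin n))
    (hLip : ∀ γ : Γ, ∃ L : ℝ, ∀ y₁ y₂ : Y, ‖h γ y₁ - h γ y₂‖ ^ β ≤ L * dist y₁ y₂)
    (hh0 : ∀ γ : Γ, h γ y₀ = 0)
    (σ : Γ → Y → Y)
    (hσ : ∀ γ : Γ, Function.Bijective (σ γ) ∧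
      ∃ c : ℝ, 0 < c ∧ ∀ y y' : Y, dist (σ γ y) (σ γ y') = c * dist y y')
    (hform : ∀ (γ : Γ) (p : EuclideanSpace ℝ (Fin n) × Y),
      ρ γ p = (a γ • A γ (p.1 + x γ + h γ p.2), σ γ p.2))
    (M : ℝ) (hM : 1 ≤ M)
    (hqs : ∀ γ : Γ, ∃ C : ℝ, 0 < C ∧
      ∀ p q : EuclideanSpace ℝ (Fin n) × Y,
        C / M * prodDist n β p q ≤ prodDist n β (ρ γ p) (ρ γ q) ∧
          prodDist n β (ρ γ p) (ρ γ q) ≤ M * C * prodDist n β p q) :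
    ∀ (γ : Γ) (y₁ y₂ : Y), dist (σ γ y₁) (σ γ y₂) = a γ ^ β * dist y₁ y₂ := by
  have : Nontrivial Y := ⟨hY⟩
  have : Nonempty (Fin n) := ⟨⟨0, hn⟩⟩
  choose _ c hc hσc using hσ
  have hρ (γ) : IsFiberedSimilarity (a γ) (c γ) (ρ γ) :=
    isFiberedSimilarity_of_eq_smul_add (ha γ) (hc γ) (A γ).toLinearIsometry
      (fun y ↦ x γ + h γ y) (hσc γ) fun p ↦ by simp [hform, add_assoc]
  rw [prodDist_eq_snowflakeProdDist] at hqs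
  intro γ y₁ y₂
  rw [hσc, similarity_constant_eq_rpow_general hβ0 ρ hρ (fun γ ↦ (hqs γ).imp fun _ hC ↦ hC.2)]
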